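/- Let 0 < p < 1 satisfy p·ln a + (1−p)·ln b < 0, and let μ be a Borel probability measure on ℝ̄₊ with μ({∞}) = 0 satisfying μ(B) = p·μ(T₀⁻¹(B)) + (1−p)·μ(T₁⁻¹(B)) for every Borel set B ⊆ ℝ̄₊. Then there exists a strictly increasing surjective map H : [0,1) → ℝ₊ such that μ (restricted to ℝ₊) is the image of Lebesgue measure on [0,1) under H, and there is an exponent α > 0 such that H is Hölder continuous with exponent α on every compact subinterval of [0,1). -/

import Mathlib

/-!
The proof works with the distribution function `F` of `μ` on `ℝ`, which satisfies
`F x = p F (x / a) + (1 - p) F ((x - 1) / b)`, and takes for `H` the inverse of `F` on `[0, 1)`.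

`F` is continuous because a stationary law has no atoms (`no_atoms`): the finite set of atoms of
maximal mass would be stable under `x ↦ x / a`, hence reduced to `0`, and `0` is not an atom because
its preimage under `T₁` is empty. Also `F < 1` everywhere, since the support is unbounded.

That `F` is strictly increasing on `[0, ∞)`, and that its inverse is Hölder, both follow from the
lower bound `y - x ≤ C (F y - F x) ^ α` for `0 ≤ x ≤ y ≤ M`, with `α` independent of `M`
(`IsStationaryCDF.exists_bound`). Pulling an interval `(x, y]` back by a generator multiplies its
mass by at most a constant `1 / q`. Although the pull-back by `T₁` contracts lengths, the relative
length `(y - x) / (x + 1 / b)` grows by a fixed factor `1 + η` if `T₀` is pulled back when `x ≤ 1`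
and `T₁` when `1 < x ≤ 1 / a`, and this rule keeps `x` in `[0, 1 / a]`
(`IsStationaryCDF.exists_bound_base`). An interval of small relative length thus becomes
relatively long after logarithmically many steps, and then its mass is bounded below; this gives
a power law.
-/

open MeasureTheory
open scoped ENNReal NNReal

/-- The generators `T₀(x) = a·x`, `T₁(x) = b·x + 1`, extended to the one-point
compactification `ℝ̄₊ = [0,∞]` (modelled by `ℝ≥0∞`) by `T₀(∞) = T₁(∞) = ∞`. -/
noncomputable def Tmap (a b : ℝ) (i : Bool) (x : ℝ≥0∞) : ℝ≥0∞ :=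
  if i then ENNReal.ofReal b * x + 1 else ENNReal.ofReal a * x

/-! ### Lower bounds for the mass of intervals -/

/-- `F` is the distribution function of a stationary law on `[0,∞)`: the stationarity equation
tested on the half-lines `(-∞, x]`. -/
structure IsStationaryCDF (a b p : ℝ) (F : ℝ → ℝ) : Prop where
  mono : Monotone F
  neg : ∀ x < 0, F x = 0
  le_one : ∀ x, F x ≤ 1
  tendsto : Filter.Tendsto F Filter.atTop (nhds 1)
  eqn : ∀ x, F x = p * F (x / a) + (1 - p) * F ((x - 1) / b)

namespace IsStationaryCDF

variable {a b p : ℝ} {F : ℝ → ℝ}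

lemma diff_zero (hF : IsStationaryCDF a b p F) (hb : 1 < b) (hp1 : p < 1)
    {x y : ℝ} (hxy : x ≤ y) : p * (F (y / a) - F (x / a)) ≤ F y - F x := by
  have h : F ((x - 1) / b) ≤ F ((y - 1) / b) := hF.mono (by gcongr)
  rw [hF.eqn x, hF.eqn y]
  nlinarith

lemma diff_one (hF : IsStationaryCDF a b p F) (ha : 0 < a) (hp0 : 0 < p)
    {x y : ℝ} (hxy : x ≤ y) :
    (1 - p) * (F ((y - 1) / b) - F ((x - 1) / b)) ≤ F y - F x := by
  have h : F (x / a) ≤ F (y / a) := hF.mono (by gcongr)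
  rw [hF.eqn x, hF.eqn y]
  nlinarith

/-- The support is unbounded: `x ↦ (x - 1) / b` moves any point below `0` in finitely many steps,
and `F x = 1` would persist along these steps. -/
lemma lt_one (hF : IsStationaryCDF a b p F) (hb : 1 < b) (hp0 : 0 < p) (hp1 : p < 1)
    (x : ℝ) : F x < 1 := by
  have key : ∀ n : ℕ, ∀ x : ℝ, x < n → F x < 1 := by
    intro n
    induction n with
    | zero => intro x hx; rw [hF.neg x (by simpa using hx)]; norm_num
    | succ n ih =>
      intro x hx
      push_cast at hx
      have h1 : F ((x - 1) / b) < 1 := by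
        apply ih
        rw [div_lt_iff₀ (by linarith)]
        nlinarith [(Nat.cast_nonneg n : (0 : ℝ) ≤ n)]
      have h2 := hF.le_one (x / a)
      rw [hF.eqn x]
      nlinarith
  obtain ⟨n, hn⟩ := exists_nat_gt x
  exact key n x hn

/-- Lower bound for the mass of intervals starting in `[0, 1/a]`. The length of an interval is
measured relative to the weight `x + κ` of its left end. Pulling back by `T₀` when `x ≤ 1` and by
`T₁` when `x > 1` stays in `[0, 1/a]` and multiplies the relative length by at least `1 + η`, while
the mass grows at most by the factor `1 / q`; the exponent `α` satisfies `q ^ α = 1 / (1 + η)`.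
Once the relative length exceeds `R`, the mass is at least `c₀`. -/
lemma exists_bound_base (hF : IsStationaryCDF a b p F) (ha : 0 < a) (ha1 : a < 1) (hb : 1 < b)
    (hp0 : 0 < p) (hp1 : p < 1) :
    ∃ α κ R C c₀ : ℝ, 0 < α ∧ 0 < κ ∧ 0 < R ∧ 0 < C ∧ 0 < c₀ ∧
      (∀ x y, 0 ≤ x → x ≤ 1 / a → R * (x + κ) ≤ y - x → c₀ ≤ F y - F x) ∧
      (∀ x y, 0 ≤ x → x ≤ 1 / a → x < y → y - x < R * (x + κ) →
        y - x ≤ C * (x + κ) * (F y - F x) ^ α) := by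
  obtain ⟨L, hL0, hL⟩ : ∃ L, 0 < L ∧ F (1 / a) < F L := by
    have h := hF.tendsto.eventually (lt_mem_nhds (hF.lt_one hb hp0 hp1 (1 / a)))
    obtain ⟨L, h1, h2⟩ := (h.and (Filter.eventually_gt_atTop 0)).exists
    exact ⟨L, h2, h1⟩
  have hb0 : 0 < b := by linarith
  have h1a : 1 < 1 / a := by rw [lt_div_iff₀ ha]; linarith
  -- Both weight inequalities below hold for this `η` and the weight `x + 1 / b`.
  obtain ⟨η, hη0, hη1, hη2⟩ : ∃ η : ℝ, 0 < η ∧ η * (b + 1) ≤ 1 - a ∧ η * b ≤ a := by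
    refine ⟨a * (1 - a) / (b + 1), ?_, ?_, ?_⟩
    · have : 0 < 1 - a := by linarith
      positivity
    · rw [div_mul_cancel₀ _ (by linarith)]; nlinarith
    · rw [div_mul_eq_mul_div, div_le_iff₀ (by linarith)]
      nlinarith [mul_pos ha hb0, mul_pos (mul_pos ha hb0) ha]
  obtain ⟨q, hq0, hq1, hqp, hqp'⟩ : ∃ q : ℝ, 0 < q ∧ q < 1 ∧ q ≤ p ∧ q ≤ 1 - p :=
    ⟨min p (1 - p), lt_min hp0 (by linarith), (min_le_left _ _).trans_lt hp1,
      min_le_left _ _, min_le_right _ _⟩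
  have hlogq : Real.log q < 0 := Real.log_neg hq0 hq1
  set α : ℝ := Real.log (1 + η) / (-Real.log q) with hα
  have hα0 : 0 < α := div_pos (Real.log_pos (by linarith)) (by linarith)
  have hqα : q ^ α * (1 + η) = 1 := by
    rw [Real.rpow_def_of_pos hq0, hα,
      show Real.log q * (Real.log (1 + η) / -Real.log q) = -Real.log (1 + η) by
        have := hlogq.ne
        field_simp, Real.exp_neg, Real.exp_log (by linarith)]
    exact inv_mul_cancel₀ (by linarith)
  set c₀ := F L - F (1 / a) with hc₀
  have hc₀0 : 0 < c₀ := by linarith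
  have hR0 : 0 < L * b := by positivity
  set R := L * b with hR
  have hqc : 0 < (q * c₀) ^ α := by positivity
  set C := R / (q * c₀) ^ α with hC
  have hC0 : 0 < C := by positivity
  set κ := 1 / b with hκ
  have hκ0 : 0 < κ := by positivity
  have hκb : κ * b = 1 := by rw [hκ]; field_simp
  have hbase : ∀ x y, 0 ≤ x → x ≤ 1 / a → R * (x + κ) ≤ y - x → c₀ ≤ F y - F x := by
    intro x y hx0 hx hy
    have h1 : F x ≤ F (1 / a) := hF.mono hx
    have h2 : F L ≤ F y := hF.mono (by
      have : R * κ = L := by rw [hR]; linear_combination L * hκb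
      nlinarith)
    linarith
  refine ⟨α, κ, R, C, c₀, hα0, hκ0, hR0, hC0, hc₀0, hbase, ?_⟩
  have key : ∀ n : ℕ, ∀ x y, 0 ≤ x → x ≤ 1 / a → x < y → y - x < R * (x + κ) →
      R * (x + κ) ≤ (1 + η) ^ n * (y - x) → y - x ≤ C * (x + κ) * (F y - F x) ^ α := by
    intro n
    induction n with
    | zero => intro x y _ _ _ h1 h2; simp at h2; linarith
    | succ n ih =>
      -- One pull-back step, for either generator: `s` is its slope, `(x', y')` the pulled-back
      -- interval.
      have step : ∀ s x y x' y' : ℝ, 0 < s → 0 ≤ x → x < y → y - x < R * (x + κ) →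
          R * (x + κ) ≤ (1 + η) ^ (n + 1) * (y - x) → 0 ≤ x' → x' ≤ 1 / a →
          y - x = s * (y' - x') → s * ((1 + η) * (x' + κ)) ≤ x + κ →
          q * (F y' - F x') ≤ F y - F x → y - x ≤ C * (x + κ) * (F y - F x) ^ α := by
        intro s x y x' y' hs hx hxy hlt hn hx0' hx' hs' hw hm
        have hxy' : x' < y' := by
          have : 0 < s * (y' - x') := by linarith
          have := pos_of_mul_pos_right this hs.le
          linarith
        have hm0 : 0 ≤ F y' - F x' := by linarith [hF.mono hxy'.le]
        by_cases hcase : R * (x' + κ) ≤ y' - x'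
        · have h1 : q * c₀ ≤ F y - F x :=
            (mul_le_mul_of_nonneg_left (hbase x' y' hx0' hx' hcase) hq0.le).trans hm
          have h2 : (q * c₀) ^ α ≤ (F y - F x) ^ α :=
            Real.rpow_le_rpow (by positivity) h1 hα0.le
          calc y - x ≤ R * (x + κ) := hlt.le
            _ = C * (x + κ) * (q * c₀) ^ α := by rw [hC]; field_simp
            _ ≤ _ := by gcongr
        · push Not at hcase
          have hrec : R * (x' + κ) ≤ (1 + η) ^ n * (y' - x') := by
            have h1 : R * (s * ((1 + η) * (x' + κ))) ≤ R * (x + κ) := by gcongr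
            have h2 : (s * (1 + η)) * (R * (x' + κ)) ≤
                (s * (1 + η)) * ((1 + η) ^ n * (y' - x')) := by
              rw [hs'] at hn
              calc _ = R * (s * ((1 + η) * (x' + κ))) := by ring
                _ ≤ _ := h1.trans hn
                _ = _ := by ring
            exact le_of_mul_le_mul_left h2 (by positivity)
          have h1 := ih x' y' hx0' hx' hxy' hcase hrec
          have h2 : q ^ α * (F y' - F x') ^ α ≤ (F y - F x) ^ α := by
            rw [← Real.mul_rpow hq0.le hm0]
            exact Real.rpow_le_rpow (by positivity) hm hα0.le
          have h3 : (F y' - F x') ^ α ≤ (1 + η) * (F y - F x) ^ α := by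
            calc (F y' - F x') ^ α = (1 + η) * (q ^ α * (F y' - F x') ^ α) := by
                  linear_combination (-(F y' - F x') ^ α) * hqα
              _ ≤ _ := by gcongr
          have hmy : 0 ≤ (F y - F x) ^ α :=
            Real.rpow_nonneg (by linarith [hF.mono hxy.le]) _
          calc y - x = s * (y' - x') := hs'
            _ ≤ s * (C * (x' + κ) * (F y' - F x') ^ α) := by gcongr
            _ ≤ s * (C * (x' + κ) * ((1 + η) * (F y - F x) ^ α)) := by gcongr
            _ = C * (s * ((1 + η) * (x' + κ))) * (F y - F x) ^ α := by ring
            _ ≤ _ := by gcongr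
      intro x y hx0 hx hxy hlt hn
      by_cases hx1 : x ≤ 1
      · have hm0 : 0 ≤ F (y / a) - F (x / a) := by
          linarith [hF.mono (show x / a ≤ y / a by gcongr)]
        refine step a x y (x / a) (y / a) ha hx0 hxy hlt hn (by positivity) (by gcongr)
          (by field_simp) ?_ ?_
        · have h1 : a * ((1 + η) * (x / a + κ)) = (1 + η) * (x + a * κ) := by field_simp
          rw [h1]
          have h2 : η * (1 + κ) ≤ (1 - a) * κ := by
            calc η * (1 + κ) = η * (b + 1) * κ := by linear_combination -η * hκb
              _ ≤ _ := by gcongr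
          nlinarith [mul_nonneg hη0.le (sub_nonneg.2 hx1),
            mul_nonneg (mul_nonneg hη0.le hκ0.le) (sub_nonneg.2 ha1.le)]
        · exact (mul_le_mul_of_nonneg_right hqp hm0).trans (hF.diff_zero hb hp1 hxy.le)
      · push Not at hx1
        have hm0 : 0 ≤ F ((y - 1) / b) - F ((x - 1) / b) := by
          linarith [hF.mono (show (x - 1) / b ≤ (y - 1) / b by gcongr)]
        refine step b x y ((x - 1) / b) ((y - 1) / b) hb0 hx0 hxy hlt hn
          (div_nonneg (by linarith) hb0.le) ?_ (by field_simp; ring) ?_ ?_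
        · rw [div_le_iff₀ hb0]; nlinarith
        · have h1 : b * ((1 + η) * ((x - 1) / b + κ)) = (1 + η) * x := by
            rw [hκ]; field_simp; ring
          rw [h1]
          have h2 : η * x ≤ κ := by
            rw [hκ, le_div_iff₀ hb0]
            have : x * a ≤ 1 := by rwa [le_div_iff₀ ha] at hx
            nlinarith
          linarith
        · exact (mul_le_mul_of_nonneg_right hqp' hm0).trans (hF.diff_one ha hp0 hxy.le)
  intro x y hx0 hx hxy hlt
  obtain ⟨n, hn⟩ := pow_unbounded_of_one_lt (R * (x + κ) / (y - x)) (show 1 < 1 + η by linarith)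
  rw [div_lt_iff₀ (by linarith)] at hn
  exact key n x y hx0 hx hxy hlt hn.le

/-- The inverse of `F` is Hölder on bounded sets, with an exponent that does not depend on the
bound `M`: pulling back by `T₁` boundedly many times brings the left end into `[0, 1/a]` and only
affects the constant. -/
lemma exists_bound (hF : IsStationaryCDF a b p F) (ha : 0 < a) (ha1 : a < 1) (hb : 1 < b)
    (hp0 : 0 < p) (hp1 : p < 1) :
    ∃ α : ℝ, 0 < α ∧ ∀ M : ℝ, ∃ C : ℝ, 0 < C ∧ ∀ x y, 0 ≤ x → x ≤ y → y ≤ M →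
      y - x ≤ C * (F y - F x) ^ α := by
  obtain ⟨α, κ, R, C, c₀, hα, hκ, hR, hC, hc₀, hlong, hshort⟩ :=
    hF.exists_bound_base ha ha1 hb hp0 hp1
  have hb0 : 0 < b := by linarith
  have h1a : 1 < 1 / a := by rw [lt_div_iff₀ ha]; linarith
  refine ⟨α, hα, fun M => ?_⟩
  have key : ∀ n : ℕ, ∃ K : ℝ, 0 < K ∧ ∀ x y, 0 ≤ x → x ≤ 1 / a + n → x < y → y ≤ M →
      y - x ≤ K * (F y - F x) ^ α := by
    intro n
    induction n with
    | zero =>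
      refine ⟨max (C * (1 / a + κ)) (M / c₀ ^ α), lt_max_of_lt_left (by positivity), ?_⟩
      intro x y hx0 hx hxy hy
      have hx' : x ≤ 1 / a := by simpa using hx
      have hmy : 0 ≤ (F y - F x) ^ α := Real.rpow_nonneg (by linarith [hF.mono hxy.le]) _
      by_cases h : R * (x + κ) ≤ y - x
      · have h1 := Real.rpow_le_rpow hc₀.le (hlong x y hx0 hx' h) hα.le
        have hM : 0 ≤ M := by linarith
        calc y - x ≤ M := by linarith
          _ = M / c₀ ^ α * c₀ ^ α := by
            have : 0 < c₀ ^ α := by positivity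
            field_simp
          _ ≤ M / c₀ ^ α * (F y - F x) ^ α := by gcongr
          _ ≤ _ := by gcongr; exact le_max_right _ _
      · push Not at h
        calc y - x ≤ C * (x + κ) * (F y - F x) ^ α := hshort x y hx0 hx' hxy h
          _ ≤ C * (1 / a + κ) * (F y - F x) ^ α := by gcongr
          _ ≤ _ := by gcongr; exact le_max_left _ _
    | succ n ih =>
      obtain ⟨K, hK, ih⟩ := ih
      have h1p : 0 < 1 - p := by linarith
      have hpα : 0 < (1 - p) ^ α := by positivity
      refine ⟨max K (b * (K / (1 - p) ^ α)), lt_max_of_lt_left hK, ?_⟩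
      intro x y hx0 hx hxy hy
      push_cast at hx
      have hmy : 0 ≤ (F y - F x) ^ α := Real.rpow_nonneg (by linarith [hF.mono hxy.le]) _
      by_cases h : x ≤ 1 / a + n
      · exact (ih x y hx0 h hxy hy).trans (by gcongr; exact le_max_left _ _)
      · push Not at h
        have hn : (0 : ℝ) ≤ n := Nat.cast_nonneg n
        have hm0 : 0 ≤ F ((y - 1) / b) - F ((x - 1) / b) := by
          linarith [hF.mono (show (x - 1) / b ≤ (y - 1) / b by gcongr)]
        have h1 := ih ((x - 1) / b) ((y - 1) / b) (div_nonneg (by linarith) hb0.le)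
          (by rw [div_le_iff₀ hb0]; nlinarith) (by gcongr)
          (by rw [div_le_iff₀ hb0]; nlinarith)
        have h2 : (1 - p) ^ α * (F ((y - 1) / b) - F ((x - 1) / b)) ^ α ≤ (F y - F x) ^ α := by
          rw [← Real.mul_rpow h1p.le hm0]
          exact Real.rpow_le_rpow (by positivity) (hF.diff_one ha hp0 hxy.le) hα.le
        calc y - x = b * ((y - 1) / b - (x - 1) / b) := by field_simp; ring
          _ ≤ b * (K * (F ((y - 1) / b) - F ((x - 1) / b)) ^ α) := by gcongr
          _ = b * (K / (1 - p) ^ α) *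
              ((1 - p) ^ α * (F ((y - 1) / b) - F ((x - 1) / b)) ^ α) := by field_simp
          _ ≤ b * (K / (1 - p) ^ α) * (F y - F x) ^ α := by gcongr
          _ ≤ _ := by gcongr; exact le_max_right _ _
  obtain ⟨n, hn⟩ := exists_nat_gt M
  obtain ⟨K, hK, h⟩ := key n
  refine ⟨K, hK, fun x y hx hxy hy => ?_⟩
  rcases hxy.eq_or_lt with rfl | hlt
  · simp [Real.zero_rpow hα.ne']
  · exact h x y hx (by linarith) hlt hy

lemma strictMonoOn (hF : IsStationaryCDF a b p F) (ha : 0 < a) (ha1 : a < 1) (hb : 1 < b)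
    (hp0 : 0 < p) (hp1 : p < 1) : StrictMonoOn F (Set.Ici 0) := by
  obtain ⟨α, hα, h⟩ := hF.exists_bound ha ha1 hb hp0 hp1
  intro x hx y _ hxy
  refine lt_of_le_of_ne (hF.mono hxy.le) fun heq => ?_
  obtain ⟨C, -, hC⟩ := h y
  have := hC x y hx hxy.le le_rfl
  rw [heq, sub_self, Real.zero_rpow hα.ne'] at this
  linarith

end IsStationaryCDF

/-! ### Stationary laws on the real line and their atoms -/

/-- Stationarity transported to `ℝ`, where no point at infinity is left. -/
lemma stationary_real {a b p : ℝ} (ha : 0 < a) (hb : 1 < b) (hp0 : 0 < p) (hp1 : p < 1)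
    (μ : Measure ℝ≥0∞) [IsProbabilityMeasure μ] (hμtop : μ {⊤} = 0)
    (hstat : ∀ B : Set ℝ≥0∞, MeasurableSet B →
      μ B = ENNReal.ofReal p * μ (Tmap a b false ⁻¹' B) +
        ENNReal.ofReal (1 - p) * μ (Tmap a b true ⁻¹' B))
    (B : Set ℝ) (hB : MeasurableSet B) :
    (μ.map ENNReal.toReal).real B = p * (μ.map ENNReal.toReal).real ((fun x => a * x) ⁻¹' B) +
      (1 - p) * (μ.map ENNReal.toReal).real ((fun x => b * x + 1) ⁻¹' B) := by
  have hB0 : MeasurableSet ((fun x : ℝ => a * x) ⁻¹' B) := (by fun_prop : Measurable _) hB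
  have hB1 : MeasurableSet ((fun x : ℝ => b * x + 1) ⁻¹' B) := (by fun_prop : Measurable _) hB
  have h := hstat _ (ENNReal.measurable_toReal hB)
  have e0 : Tmap a b false ⁻¹' (ENNReal.toReal ⁻¹' B) =
      ENNReal.toReal ⁻¹' ((fun x : ℝ => a * x) ⁻¹' B) := by
    ext x
    simp [Tmap, ENNReal.toReal_mul, ENNReal.toReal_ofReal ha.le]
  have e1 : μ (Tmap a b true ⁻¹' (ENNReal.toReal ⁻¹' B)) =
      μ (ENNReal.toReal ⁻¹' ((fun x : ℝ => b * x + 1) ⁻¹' B)) := by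
    apply measure_congr
    have hne : ∀ᵐ x ∂μ, x ≠ ⊤ := by simpa [ae_iff] using hμtop
    filter_upwards [hne] with x hx
    refine propext ?_
    change (Tmap a b true x).toReal ∈ B ↔ b * x.toReal + 1 ∈ B
    simp [Tmap, ENNReal.toReal_add (ENNReal.mul_ne_top ENNReal.ofReal_ne_top hx)
      ENNReal.one_ne_top, ENNReal.toReal_mul, ENNReal.toReal_ofReal (by linarith : 0 ≤ b)]
  rw [e0, e1] at h
  simp only [measureReal_def, Measure.map_apply ENNReal.measurable_toReal hB,
    Measure.map_apply ENNReal.measurable_toReal hB0,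
    Measure.map_apply ENNReal.measurable_toReal hB1]
  rw [h, ENNReal.toReal_add (ENNReal.mul_ne_top ENNReal.ofReal_ne_top (measure_ne_top _ _))
    (ENNReal.mul_ne_top ENNReal.ofReal_ne_top (measure_ne_top _ _)), ENNReal.toReal_mul,
    ENNReal.toReal_mul, ENNReal.toReal_ofReal hp0.le, ENNReal.toReal_ofReal (by linarith)]

/-- A stationary law has no atoms. Among the finitely many atoms of maximal mass take the largest,
`x`; stationarity at `x` forces `x / a` to have the same mass, and `x / a > x` since `x > 0`. -/
lemma no_atoms {a b p : ℝ} (ha : 0 < a) (ha1 : a < 1) (hb : 1 < b) (hp0 : 0 < p) (hp1 : p < 1)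
    (ν : Measure ℝ) [IsProbabilityMeasure ν] (hneg : ν (Set.Iio 0) = 0)
    (h : ∀ B, MeasurableSet B → ν.real B = p * ν.real ((fun x => a * x) ⁻¹' B) +
      (1 - p) * ν.real ((fun x => b * x + 1) ⁻¹' B)) (z : ℝ) : ν {z} = 0 := by
  have hb0 : 0 < b := by linarith
  have hatom : ∀ x, ν.real {x} = p * ν.real {x / a} + (1 - p) * ν.real {(x - 1) / b} := by
    intro x
    have e0 : (fun y => a * y) ⁻¹' {x} = {x / a} := by
      ext y; simp [eq_div_iff ha.ne', mul_comm]
    have e1 : (fun y => b * y + 1) ⁻¹' {x} = {(x - 1) / b} := by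
      ext y; simp [eq_div_iff hb0.ne', mul_comm, eq_sub_iff_add_eq]
    rw [h _ (measurableSet_singleton x), e0, e1]
  have hneg' : ∀ x < 0, ν.real {x} = 0 := fun x hx => by
    rw [measureReal_def, measure_mono_null (Set.singleton_subset_iff.2 (Set.mem_Iio.2 hx)) hneg]; rfl
  have hzero : ν.real {(0 : ℝ)} = 0 := by
    have h0 := hatom 0
    rw [hneg' ((0 - 1) / b) (div_neg_of_neg_of_pos (by norm_num) hb0), zero_div] at h0
    nlinarith
  by_contra hz
  have hz' : 0 < ν.real {z} := by
    rw [measureReal_def]; exact ENNReal.toReal_pos hz (measure_ne_top _ _)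
  have hfin : ∀ ε : ℝ, 0 < ε → {x | ε ≤ ν.real {x}}.Finite := by
    intro ε hε
    have := Measure.finite_const_le_meas_of_disjoint_iUnion ν (ε := ENNReal.ofReal ε)
      (by simpa using hε) (As := fun x : ℝ => {x}) (fun x => measurableSet_singleton x)
      (fun x y hxy => by simpa using hxy) (measure_ne_top _ _)
    refine this.subset fun x hx => ?_
    exact (ENNReal.ofReal_le_iff_le_toReal (measure_ne_top _ _)).2 hx
  obtain ⟨x₁, hx₁, hmax⟩ := Set.exists_max_image _ (fun x => ν.real {x}) (hfin _ hz')
    ⟨z, le_refl (ν.real {z})⟩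
  have hx₁' : 0 < ν.real {x₁} := hz'.trans_le hx₁
  have hmax' : ∀ y, ν.real {y} ≤ ν.real {x₁} := by
    intro y
    by_cases hy : ν.real {z} ≤ ν.real {y}
    · exact hmax y hy
    · exact (not_le.1 hy).le.trans hx₁
  obtain ⟨x, hx, hlast⟩ := Set.exists_max_image _ id (hfin _ hx₁')
    ⟨x₁, le_refl (ν.real {x₁})⟩
  have hx : ν.real {x₁} ≤ ν.real {x} := hx
  have hxpos : 0 < x := by
    rcases lt_trichotomy x 0 with h0 | h0 | h0
    · rw [hneg' x h0] at hx; linarith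
    · rw [h0, hzero] at hx; linarith
    · exact h0
  have hxa : ν.real {x₁} ≤ ν.real {x / a} := by
    have h1 := hatom x
    have h2 := hmax' ((x - 1) / b)
    nlinarith
  have h3 : x / a ≤ x := hlast _ hxa
  rw [div_le_iff₀ ha] at h3
  nlinarith

/-! ### The inverse distribution function -/

/-- **Theorem H / Theorem 6.7.** Let `0 < p < 1` with `p·ln a + (1−p)·ln b < 0`
(negative Lyapunov exponent of the `(p, 1−p)` Bernoulli measure), and let `μ` be a
probability measure on `ℝ̄₊` with `μ({∞}) = 0` satisfying the stationarity equation
`μ(B) = p·μ(T₀⁻¹(B)) + (1−p)·μ(T₁⁻¹(B))` for every Borel set `B` (i.e. `μ` is the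
`(T₀, T₁, ν)`-invariant measure). Then `μ`, restricted to `ℝ₊` (via `ENNReal.toReal`),
is the image of Lebesgue measure on `[0,1)` under a strictly increasing map `H` from
`[0,1)` onto `ℝ₊` which is Hölder continuous with the same exponent on each compact
subinterval. -/
theorem holder_image_of_lebesgue (a b p : ℝ) (ha : 0 < a) (ha1 : a < 1) (hb : 1 < b)
    (hp0 : 0 < p) (hp1 : p < 1)
    (hlyap : p * Real.log a + (1 - p) * Real.log b < 0)
    (μ : Measure ℝ≥0∞) [IsProbabilityMeasure μ] (hμtop : μ {⊤} = 0)
    (hstat : ∀ B : Set ℝ≥0∞, MeasurableSet B →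
      μ B = ENNReal.ofReal p * μ (Tmap a b false ⁻¹' B) +
        ENNReal.ofReal (1 - p) * μ (Tmap a b true ⁻¹' B)) :
    ∃ H : ℝ → ℝ,
      StrictMonoOn H (Set.Ico 0 1) ∧
      H '' Set.Ico 0 1 = Set.Ici 0 ∧
      (volume.restrict (Set.Ico (0 : ℝ) 1)).map H = μ.map ENNReal.toReal ∧
      ∃ α : ℝ≥0, 0 < α ∧ ∀ c d : ℝ, 0 ≤ c → c ≤ d → d < 1 →
        ∃ C : ℝ≥0, HolderOnWith C α H (Set.Icc c d) := by
  set ν := μ.map ENNReal.toReal with hν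
  have hprob : IsProbabilityMeasure ν :=
    Measure.isProbabilityMeasure_map ENNReal.measurable_toReal.aemeasurable
  have hneg : ν (Set.Iio 0) = 0 := by
    rw [hν, Measure.map_apply ENNReal.measurable_toReal measurableSet_Iio]
    convert measure_empty (μ := μ)
    ext x; simp
  have hstat' := stationary_real ha hb hp0 hp1 μ hμtop hstat
  rw [← hν] at hstat'
  have hb0 : 0 < b := by linarith
  set F : ℝ → ℝ := ⇑(ProbabilityTheory.cdf ν)
  have hFν : ∀ x, F x = ν.real (Set.Iic x) := ProbabilityTheory.cdf_eq_real ν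
  have hF : IsStationaryCDF a b p F := by
    refine ⟨ProbabilityTheory.monotone_cdf ν, fun x hx => ?_, ProbabilityTheory.cdf_le_one ν,
      ProbabilityTheory.tendsto_cdf_atTop ν, fun x => ?_⟩
    · rw [hFν, measureReal_def, measure_mono_null (Set.Iic_subset_Iio.2 hx) hneg]; rfl
    · have e0 : (fun y => a * y) ⁻¹' Set.Iic x = Set.Iic (x / a) := by
        ext y; simp [le_div_iff₀ ha, mul_comm]
      have e1 : (fun y => b * y + 1) ⁻¹' Set.Iic x = Set.Iic ((x - 1) / b) := by
        ext y; simp [le_div_iff₀ hb0, mul_comm, le_sub_iff_add_le]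
      rw [hFν, hFν, hFν, hstat' _ measurableSet_Iic, e0, e1]
  have hatoms := no_atoms ha ha1 hb hp0 hp1 ν hneg hstat'
  have hcont : Continuous F := by
    refine continuous_iff_continuousAt.2 fun x => ?_
    rw [hF.mono.continuousAt_iff_leftLim_eq_rightLim]
    have h1 : Function.rightLim F x = F x := (ProbabilityTheory.cdf ν).rightLim_eq x
    have h2 := (ProbabilityTheory.cdf ν).measure_singleton x
    rw [ProbabilityTheory.measure_cdf, hatoms x, eq_comm, ENNReal.ofReal_eq_zero] at h2
    rw [h1]
    exact le_antisymm (hF.mono.leftLim_le le_rfl) (by linarith)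
  have hsm := hF.strictMonoOn ha ha1 hb hp0 hp1
  have hF0 : F 0 = 0 := by
    rw [hFν, measureReal_def, ← Set.Iio_union_right,
      measure_union_null hneg (hatoms 0)]; rfl
  have hlt1 := hF.lt_one hb hp0 hp1
  have hnn : ∀ x, 0 ≤ F x := ProbabilityTheory.cdf_nonneg ν
  have hex : ∀ t : ℝ, ∃ x : ℝ, t ∈ Set.Ico (0 : ℝ) 1 → 0 ≤ x ∧ F x = t := by
    intro t
    by_cases ht : t ∈ Set.Ico (0 : ℝ) 1
    · obtain ⟨L, h1, h2⟩ := ((hF.tendsto.eventually (lt_mem_nhds ht.2)).and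
        (Filter.eventually_ge_atTop 0)).exists
      obtain ⟨x, hx, hxt⟩ := intermediate_value_Icc h2 hcont.continuousOn
        (show t ∈ Set.Icc (F 0) (F L) from ⟨hF0.le.trans ht.1, h1.le⟩)
      exact ⟨x, fun _ => ⟨hx.1, hxt⟩⟩
    · exact ⟨0, fun h => absurd h ht⟩
  choose H hH using hex
  have hmono : StrictMonoOn H (Set.Ico 0 1) := by
    intro s hs t ht hst
    by_contra hle
    have := hF.mono (not_lt.1 hle)
    rw [(hH s hs).2, (hH t ht).2] at this
    linarith
  have hHF : ∀ x, 0 ≤ x → H (F x) = x := fun x hx =>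
    have h := hH (F x) ⟨hnn x, hlt1 x⟩
    hsm.injOn h.1 hx h.2
  refine ⟨H, hmono, ?_, ?_, ?_⟩
  · ext x
    constructor
    · rintro ⟨t, ht, rfl⟩
      exact (hH t ht).1
    · intro hx
      exact ⟨F x, ⟨hnn x, hlt1 x⟩, hHF x hx⟩
  · have hae : AEMeasurable H (volume.restrict (Set.Ico (0 : ℝ) 1)) :=
      aemeasurable_restrict_of_monotoneOn measurableSet_Ico hmono.monotoneOn
    have : IsFiniteMeasure (volume.restrict (Set.Ico (0 : ℝ) 1)) := ⟨by simp⟩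
    refine Measure.ext_of_Iic _ _ fun x => ?_
    rw [Measure.map_apply_of_aemeasurable hae measurableSet_Iic,
      Measure.restrict_apply' measurableSet_Ico, ← ProbabilityTheory.ofReal_cdf ν x]
    change _ = ENNReal.ofReal (F x)
    rcases lt_or_ge x 0 with hx | hx
    · rw [hF.neg x hx, ENNReal.ofReal_zero]
      convert measure_empty (μ := (volume : Measure ℝ))
      ext t
      simp only [Set.mem_inter_iff, Set.mem_preimage, Set.mem_Iic, Set.mem_empty_iff_false,
        iff_false, not_and]
      intro h1 h2
      linarith [(hH t h2).1]
    · have : H ⁻¹' Set.Iic x ∩ Set.Ico 0 1 = Set.Icc 0 (F x) := by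
        ext t
        simp only [Set.mem_inter_iff, Set.mem_preimage, Set.mem_Iic]
        constructor
        · rintro ⟨h1, h2⟩
          exact ⟨h2.1, (hH t h2).2.symm.le.trans (hF.mono h1)⟩
        · rintro ⟨h1, h2⟩
          have ht : t ∈ Set.Ico (0 : ℝ) 1 := ⟨h1, h2.trans_lt (hlt1 x)⟩
          refine ⟨?_, ht⟩
          rw [← hHF x hx]
          exact hmono.monotoneOn ht ⟨hnn x, hlt1 x⟩ h2
      rw [this, Real.volume_Icc, sub_zero]
  · obtain ⟨α, hα, hbd⟩ := hF.exists_bound ha ha1 hb hp0 hp1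
    refine ⟨⟨α, hα.le⟩, hα, fun c d hc hcd hd => ?_⟩
    have hdI : d ∈ Set.Ico (0 : ℝ) 1 := ⟨hc.trans hcd, hd⟩
    obtain ⟨C, hC, hbd⟩ := hbd (H d)
    refine ⟨C.toNNReal, ?_⟩
    have key : ∀ s t, s ∈ Set.Icc c d → t ∈ Set.Icc c d → s ≤ t →
        edist (H s) (H t) ≤ ENNReal.ofReal C * edist s t ^ α := by
      intro s t hs ht hst
      have hsI : s ∈ Set.Ico (0 : ℝ) 1 := ⟨hc.trans hs.1, hs.2.trans_lt hd⟩
      have htI : t ∈ Set.Ico (0 : ℝ) 1 := ⟨hc.trans ht.1, ht.2.trans_lt hd⟩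
      have hHst := hmono.monotoneOn hsI htI hst
      have h := hbd (H s) (H t) (hH s hsI).1 hHst (hmono.monotoneOn htI hdI ht.2)
      rw [(hH s hsI).2, (hH t htI).2] at h
      rw [edist_comm, edist_comm s t, edist_dist, edist_dist, Real.dist_eq, Real.dist_eq,
        abs_of_nonneg (sub_nonneg.2 hHst), abs_of_nonneg (sub_nonneg.2 hst),
        ENNReal.ofReal_rpow_of_nonneg (sub_nonneg.2 hst) hα.le, ← ENNReal.ofReal_mul hC.le]
      exact ENNReal.ofReal_le_ofReal h
    intro s hs t ht
    rcases le_total s t with hst | hst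
    · exact key s t hs ht hst
    · rw [edist_comm, edist_comm s t]
      exact key t s ht hs hst
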